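/- arXiv:1101.5470 — 2 statements merged into one kernel-verified Lean document; each statement's English description precedes it below -/
import Mathlib

section
/- Let Q₈ denote the quaternion group {±1, ±i, ±j, ±k} of order 8, and let K be the subgroup of Q₈ × Q₈ × Q₈ consisting of the triples (ε₁, ε₂, ε₃) with each ε_l ∈ {1, −1} and ε₁ε₂ε₃ = 1. Set G = (Q₈ × Q₈ × Q₈)/K. If H is a maximal abelian subgroup of G, then there exists an automorphism ψ of G, lying in the subgroup of Aut(G) generated by the automorphisms induced by triples (φ₁, φ₂, φ₃) of automorphisms of Q₈ acting componentwise and by the automorphisms induced by permutations of the three factors Q₈, such that ψ(H) is one of the following subgroups of G: (a) ⟨i⟩³/K, the image of ⟨i⟩ × ⟨i⟩ × ⟨i⟩; (b) the image in G of the set {(x, x, y) : x ∈ Q₈, y ∈ ⟨i⟩}; (c) the subgroup of G generated by the images of (i,i,i), (j,j,i), and (i,j,j). -/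
/-- A subgroup is maximal abelian if it is commutative and every commutative
subgroup containing it equals it. -/
def IsMaximalAbelian {G : Type*} [Group G] (H : Subgroup G) : Prop :=
  IsMulCommutative H ∧ ∀ H' : Subgroup G, IsMulCommutative H' → H ≤ H' → H' = H

/-! The commutator form turns `G / Z(G)`, where `Z(G) = {1, -1}`, into the orthogonal sum of three
symplectic planes `Q₈ / {1, -1}` over the field with two elements, and two elements of `G` commute
if and only if their classes are orthogonal. Hence the maximal abelian subgroups of `G` are the
preimages of the Lagrangian subspaces. The automorphisms of `Q₈` induce all of `SL₂` on its plane,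
so that it remains to classify Lagrangians of a sum of three planes under the wreath product
`SL₂ ≀ S₃`, which is possible over every field: the three cases are that the Lagrangian contains a
nonzero vector supported in a single plane for all planes, for some planes only, or for none. -/

section SymplecticPlanes

variable {K : Type*} [Field K]

variable (K) in
/-- The standard symplectic form on the plane `K × K`. -/
def area : LinearMap.BilinForm K (K × K) :=
  LinearMap.mk₂ K (fun u v => u.1 * v.2 - u.2 * v.1)
    (by intros; simp only [Prod.fst_add, Prod.snd_add]; ring)
    (by intros; simp only [Prod.smul_fst, Prod.smul_snd, smul_eq_mul]; ring)
    (by intros; simp only [Prod.fst_add, Prod.snd_add]; ring)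
    (by intros; simp only [Prod.smul_fst, Prod.smul_snd, smul_eq_mul]; ring)

@[simp]
theorem area_apply (u v : K × K) : area K u v = u.1 * v.2 - u.2 * v.1 := rfl

theorem area_self (u : K × K) : area K u u = 0 := by
  simp [mul_comm]

theorem area_swap (u v : K × K) : area K v u = -area K u v := by
  simp only [area_apply]; ring

theorem area_smul_eq (u v w : K × K) :
    area K u v • w = area K w v • u + area K u w • v := by
  ext <;> simp only [area_apply, Prod.smul_fst, Prod.smul_snd, Prod.fst_add, Prod.snd_add,
    smul_eq_mul] <;> ring

theorem exists_area_eq_one {u : K × K} (hu : u ≠ 0) : ∃ v, area K u v = 1 := by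
  by_cases h : u.1 = 0
  · have h' : u.2 ≠ 0 := fun h' => hu (Prod.ext h h')
    exact ⟨(-u.2⁻¹, 0), by simp [h']⟩
  · exact ⟨(0, u.1⁻¹), by simp [h]⟩

theorem exists_eq_smul_of_area_eq_zero {u v : K × K} (hv : v ≠ 0) (h : area K v u = 0) :
    ∃ c : K, u = c • v := by
  obtain ⟨w, hw⟩ := exists_area_eq_one hv
  exact ⟨area K u w, by simpa [hw, h] using area_smul_eq v w u⟩

theorem area_eq_zero_of_area_eq_zero {u v w : K × K} (hw : w ≠ 0) (hu : area K w u = 0)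
    (hv : area K w v = 0) : area K u v = 0 := by
  obtain ⟨c, rfl⟩ := exists_eq_smul_of_area_eq_zero hw hu
  simp only [map_smul, LinearMap.smul_apply, hv, smul_zero]

theorem eq_zero_of_forall_ne_apply_eq_zero {ι V : Type*} [DecidableEq ι] [AddCommGroup V]
    [Module K V] {L : Submodule K (ι → V)} {l : ι} (h : ∀ z, Pi.single l z ∈ L → z = 0)
    {x : ι → V} (hx : x ∈ L) (hl : ∀ m ≠ l, x m = 0) : x = 0 := by
  have hx' : x = Pi.single l (x l) := by
    ext1 m
    rcases eq_or_ne m l with rfl | hm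
    · rw [Pi.single_eq_same]
    · rw [hl m hm, Pi.single_eq_of_ne hm]
  rw [hx', h (x l) (hx' ▸ hx), Pi.single_zero]

theorem exists_forall_area_eq_zero {W : Submodule K (K × K)} (hW : W ≠ ⊤) :
    ∃ z ≠ 0, ∀ w ∈ W, area K z w = 0 := by
  obtain ⟨φ, hφ, hWφ⟩ := W.exists_le_ker_of_lt_top hW.lt_top
  have φ_eq (w : K × K) : φ w = area K (φ (0, 1), -φ (1, 0)) w := by
    conv_lhs => rw [show w = w.1 • (1, 0) + w.2 • (0, 1) by ext <;> simp]
    simp only [map_add, map_smul, smul_eq_mul, area_apply]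
    ring
  refine ⟨(φ (0, 1), -φ (1, 0)), fun h => hφ ?_, fun w hw => ?_⟩
  · ext <;> simp_all
  · rw [← φ_eq]
    exact hWφ hw

/-- A linear endomorphism of the plane `K × K` preserving the symplectic form, that is, an element
of `SL₂(K)`. -/
def AreaPreserving (f : K × K →ₗ[K] K × K) : Prop :=
  ∀ u v, area K (f u) (f v) = area K u v

theorem AreaPreserving.id : AreaPreserving (K := K) .id := fun _ _ => rfl

theorem AreaPreserving.injective {f : K × K →ₗ[K] K × K} (hf : AreaPreserving f) :
    Function.Injective f := by
  refine (injective_iff_map_eq_zero f).2 fun u hu => ?_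
  by_contra h
  obtain ⟨v, hv⟩ := exists_area_eq_one h
  simp [← hf u v, hu] at hv

/-- The coordinates with respect to a symplectic basis `a, b` of the plane: if `area K a b = 1`,
this is the linear map with `a ↦ (1, 0)` and `b ↦ (0, 1)`. -/
def symplecticCoords (a b : K × K) : K × K →ₗ[K] K × K :=
  ((area K).flip b).prod (area K a)

theorem symplecticCoords_apply (a b v : K × K) :
    symplecticCoords a b v = (area K v b, area K a v) := rfl

theorem areaPreserving_symplecticCoords {a b : K × K} (hab : area K a b = 1) :
    AreaPreserving (symplecticCoords a b) := by
  intro u v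
  simp only [symplecticCoords_apply, area_apply] at hab ⊢
  linear_combination (u.1 * v.2 - u.2 * v.1) * hab

variable {ι : Type*}

/-- The action of the wreath product `SL₂(K) ≀ Perm ι` on a sum of planes: permute the summands
by `σ`, then apply `f l` to the summand `l`. -/
def wreathMap (σ : Equiv.Perm ι) (f : ι → K × K →ₗ[K] K × K) :
    (ι → K × K) →ₗ[K] (ι → K × K) :=
  .pi fun l => f l ∘ₗ LinearMap.proj (σ l)

theorem wreathMap_apply (σ : Equiv.Perm ι) (f : ι → K × K →ₗ[K] K × K) (v : ι → K × K) (l : ι) :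
    wreathMap σ f v l = f l (v (σ l)) := rfl

variable [Fintype ι]

variable (K ι) in
/-- The symplectic form of the orthogonal sum of copies of the symplectic plane indexed by `ι`. -/
def areaSum : LinearMap.BilinForm K (ι → K × K) :=
  ∑ l, (area K).compl₁₂ (LinearMap.proj l) (LinearMap.proj l)

theorem areaSum_apply (v w : ι → K × K) : areaSum K ι v w = ∑ l, area K (v l) (w l) := by
  simp [areaSum, LinearMap.sum_apply]

theorem areaSum_single_left [DecidableEq ι] (l : ι) (z : K × K) (v : ι → K × K) :
    areaSum K ι (Pi.single l z) v = area K z (v l) := by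
  rw [areaSum_apply, Finset.sum_eq_single l] <;> simp +contextual

theorem areaSum_swap (v w : ι → K × K) : areaSum K ι w v = -areaSum K ι v w := by
  rw [areaSum_apply, areaSum_apply, ← Finset.sum_neg_distrib]
  exact Finset.sum_congr rfl fun l _ => area_swap _ _

theorem areaSum_wreathMap (σ : Equiv.Perm ι) {f : ι → K × K →ₗ[K] K × K}
    (hf : ∀ l, AreaPreserving (f l)) (v w : ι → K × K) :
    areaSum K ι (wreathMap σ f v) (wreathMap σ f w) = areaSum K ι v w := by
  simp only [areaSum_apply, wreathMap_apply, hf _ _ _]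
  exact Equiv.sum_comp σ fun l => area K (v l) (w l)

/-- A subspace of a sum of symplectic planes is isotropic if the form vanishes on it. -/
def IsIsotropic (L : Submodule K (ι → K × K)) : Prop :=
  L ≤ (areaSum K ι).orthogonal L

/-- A subspace of a sum of symplectic planes is Lagrangian if it is its own orthogonal. -/
def IsLagrangian (L : Submodule K (ι → K × K)) : Prop :=
  (areaSum K ι).orthogonal L = L

namespace IsLagrangian

variable {L M : Submodule K (ι → K × K)}

theorem areaSum_eq_zero (hL : IsLagrangian L) {v w : ι → K × K} (hv : v ∈ L) (hw : w ∈ L) :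
    areaSum K ι v w = 0 :=
  hL.ge hw v hv

theorem card_le_finrank (hL : IsLagrangian L) : Fintype.card ι ≤ Module.finrank K L := by
  have h := LinearMap.BilinForm.finrank_add_finrank_orthogonal' (B := areaSum K ι) L
  have dim : Module.finrank K (ι → K × K) = Fintype.card ι * 2 := by
    simp [Module.finrank_pi_fintype]
  rw [hL] at h
  lia

theorem exists_mem_apply_eq_zero (hL : IsLagrangian L) (hι : 2 < Fintype.card ι) (l : ι) :
    ∃ v ∈ L, v ≠ 0 ∧ v l = 0 := by
  have dim : Module.finrank K (K × K) < Module.finrank K L :=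
    lt_of_lt_of_le (by simpa) hL.card_le_finrank
  obtain ⟨v, hv, hv0⟩ := Submodule.exists_mem_ne_zero_of_ne_bot
    (((LinearMap.proj l).domRestrict L).ker_ne_bot_of_finrank_lt dim)
  exact ⟨v, v.2, by simpa using hv0, hv⟩

theorem eq_comap_wreathMap (hL : IsLagrangian L) (hM : IsIsotropic M) (σ : Equiv.Perm ι)
    {f : ι → K × K →ₗ[K] K × K} (hf : ∀ l, AreaPreserving (f l))
    (h : L ≤ M.comap (wreathMap σ f)) : L = M.comap (wreathMap σ f) := by
  refine h.antisymm fun v hv => hL.le fun w hw => ?_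
  rw [← areaSum_wreathMap σ hf]
  exact hM hv _ (h hw)

variable [DecidableEq ι]

theorem area_eq_zero_of_single_mem (hL : IsLagrangian L) {l : ι} {z : K × K}
    (hz : Pi.single l z ∈ L) {v : ι → K × K} (hv : v ∈ L) : area K z (v l) = 0 := by
  rw [← areaSum_single_left]
  exact hL.areaSum_eq_zero hz hv

theorem exists_mem_apply_eq (hL : IsLagrangian L) {l : ι}
    (hl : ∀ z, Pi.single l z ∈ L → z = 0) (x : K × K) : ∃ v ∈ L, v l = x := by
  suffices L.map (LinearMap.proj l) = ⊤ from this.ge (Submodule.mem_top (x := x))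
  by_contra hproj
  obtain ⟨z, hz, hzL⟩ := exists_forall_area_eq_zero hproj
  refine hz (hl z (hL.le fun v hv => ?_))
  rw [areaSum_swap, areaSum_single_left, hzL (v l) ⟨v, hv, rfl⟩, neg_zero]

end IsLagrangian

variable (K ι) in
/-- The sum over `l` of the first coordinate axes of the planes, the model of case (a). -/
def axisSubmodule : Submodule K (ι → K × K) where
  carrier := {v | ∀ l, (v l).2 = 0}
  zero_mem' _ := rfl
  add_mem' hv hw l := by simp [hv l, hw l]
  smul_mem' c v hv l := by simp [hv l]

variable (K) in
/-- The sum of the graph of an anti-isometry between two planes and of an axis in the third plane,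
the model of case (b). The sign disappears over `ZMod 2`, where the graph is the diagonal. -/
def graphSubmodule : Submodule K (Fin 3 → K × K) where
  carrier := {v | v 1 = ((v 0).1, -(v 0).2) ∧ (v 2).2 = 0}
  zero_mem' := ⟨by ext <;> simp, rfl⟩
  add_mem' := by
    rintro v w ⟨hv, hv'⟩ ⟨hw, hw'⟩
    simp [hv, hw, hv', hw', add_comm]
  smul_mem' := by
    rintro c v ⟨hv, hv'⟩
    simp [hv, hv']

variable (K ι) in
/-- The vectors with constant first and zero-sum second coordinates with respect to the symplectic
basis `(1, 0), (1, 1)` of each plane, the model of case (c). -/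
def constSumZeroSubmodule : Submodule K (ι → K × K) where
  carrier := {v | (∃ s, ∀ l, (v l).1 - (v l).2 = s) ∧ ∑ l, (v l).2 = 0}
  zero_mem' := ⟨⟨0, by simp⟩, by simp⟩
  add_mem' := by
    rintro v w ⟨⟨s, hs⟩, hv⟩ ⟨⟨t, ht⟩, hw⟩
    refine ⟨⟨s + t, fun l => ?_⟩, by simp [Finset.sum_add_distrib, hv, hw]⟩
    simp only [Pi.add_apply, Prod.fst_add, Prod.snd_add, ← hs l, ← ht l]
    ring
  smul_mem' := by
    rintro c v ⟨⟨s, hs⟩, hv⟩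
    exact ⟨⟨c * s, fun l => by simp [← hs l, mul_sub]⟩, by simp [← Finset.mul_sum, hv]⟩

theorem isIsotropic_axisSubmodule : IsIsotropic (axisSubmodule K ι) := by
  intro v hv w hw
  simp [areaSum_apply, hv _, hw _]

theorem isIsotropic_graphSubmodule : IsIsotropic (graphSubmodule K) := by
  rintro v ⟨hv, hv'⟩ w ⟨hw, hw'⟩
  simp only [areaSum_apply, Fin.sum_univ_three, area_apply, hv, hv', hw, hw']
  ring

theorem isIsotropic_constSumZeroSubmodule : IsIsotropic (constSumZeroSubmodule K ι) := by
  rintro v ⟨⟨s, hs⟩, hv⟩ w ⟨⟨t, ht⟩, hw⟩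
  calc areaSum K ι w v = ∑ l, (t * (v l).2 - s * (w l).2) := by
        rw [areaSum_apply]
        refine Finset.sum_congr rfl fun l _ => ?_
        rw [area_apply, ← hs l, ← ht l]
        ring
    _ = 0 := by rw [Finset.sum_sub_distrib, ← Finset.mul_sum, ← Finset.mul_sum, hv, hw]; ring

namespace IsLagrangian

theorem eq_comap_axisSubmodule [DecidableEq ι] {L : Submodule K (ι → K × K)} (hL : IsLagrangian L)
    (h : ∀ l, ∃ z ≠ 0, Pi.single l z ∈ L) :
    ∃ σ f, (∀ l, AreaPreserving (f l)) ∧ L = (axisSubmodule K ι).comap (wreathMap σ f) := by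
  choose z hz hzL using h
  choose w hw using fun l => exists_area_eq_one (hz l)
  refine ⟨1, fun l => symplecticCoords (z l) (w l),
    fun l => areaPreserving_symplecticCoords (hw l), ?_⟩
  exact hL.eq_comap_wreathMap isIsotropic_axisSubmodule _
    (fun l => areaPreserving_symplecticCoords (hw l))
    fun v hv l => hL.area_eq_zero_of_single_mem (hzL l) hv

variable {L : Submodule K (Fin 3 → K × K)}

theorem eq_comap_graphSubmodule (hL : IsLagrangian L) {l m : Fin 3} {z : K × K} (hz : z ≠ 0)
    (hzL : Pi.single l z ∈ L) (hm : ∀ x, Pi.single m x ∈ L → x = 0) :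
    ∃ σ f, (∀ k, AreaPreserving (f k)) ∧ L = (graphSubmodule K).comap (wreathMap σ f) := by
  have hml : m ≠ l := by rintro rfl; exact hz (hm z hzL)
  have exists_perm : ∀ m l : Fin 3, m ≠ l → ∃ σ : Equiv.Perm (Fin 3), σ 0 = m ∧ σ 2 = l := by
    decide
  obtain ⟨σ, rfl, rfl⟩ := exists_perm m l hml
  obtain ⟨p, hp, hp0⟩ := hL.exists_mem_apply_eq hm (1, 0)
  obtain ⟨q, hq, hq0⟩ := hL.exists_mem_apply_eq hm (0, 1)
  obtain ⟨y, hy⟩ := exists_area_eq_one hz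
  have area_slot_one {v w} (hv : v ∈ L) (hw : w ∈ L) :
      area K (v (σ 1)) (w (σ 1)) = -area K (v (σ 0)) (w (σ 0)) := by
    have h := hL.areaSum_eq_zero hv hw
    rw [areaSum_apply, ← Equiv.sum_comp σ, Fin.sum_univ_three,
      area_eq_zero_of_area_eq_zero hz (hL.area_eq_zero_of_single_mem hzL hv)
        (hL.area_eq_zero_of_single_mem hzL hw)] at h
    linear_combination h
  have hpq : area K (p (σ 1)) (-q (σ 1)) = 1 := by
    rw [map_neg, area_slot_one hp hq, hp0, hq0]; simp
  have hf : ∀ k, AreaPreserving (![.id, symplecticCoords (p (σ 1)) (-q (σ 1)),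
      symplecticCoords z y] k) := by
    simp [Fin.forall_fin_succ, AreaPreserving.id, areaPreserving_symplecticCoords hpq,
      areaPreserving_symplecticCoords hy]
  refine ⟨σ, _, hf, hL.eq_comap_wreathMap isIsotropic_graphSubmodule σ hf fun v hv => ⟨?_, ?_⟩⟩
  · change symplecticCoords _ _ (v (σ 1)) = ((v (σ 0)).1, -(v (σ 0)).2)
    rw [symplecticCoords_apply, map_neg, area_slot_one hv hq, area_slot_one hp hv, hp0, hq0]
    simp
  · exact hL.area_eq_zero_of_single_mem hzL hv

theorem eq_comap_constSumZeroSubmodule_of_area_eq [Nonempty ι]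
    {L : Submodule K (ι → K × K)} (hL : IsLagrangian L)
    {v b : ι → K × K} (hv : v ∈ L) (hb : ∀ x ∈ L, ∀ l m, area K (x l) (b l) = area K (x m) (b m))
    (hvb : ∀ l, area K (v l) (b l) = 1) :
    ∃ σ f, (∀ l, AreaPreserving (f l)) ∧
      L = (constSumZeroSubmodule K ι).comap (wreathMap σ f) := by
  have hf (l : ι) : AreaPreserving (symplecticCoords (v l) (b l - v l)) :=
    areaPreserving_symplecticCoords (by rw [map_sub, hvb, area_self, sub_zero])
  refine ⟨1, _, hf, hL.eq_comap_wreathMap isIsotropic_constSumZeroSubmodule 1 hf fun x hx =>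
    ⟨⟨area K (x (Classical.arbitrary ι)) (b (Classical.arbitrary ι)), fun l => ?_⟩, ?_⟩⟩
  · rw [← hb x hx l, wreathMap_apply, Equiv.Perm.one_apply, symplecticCoords_apply, map_sub,
      area_swap (x l) (v l)]
    ring
  · rw [← hL.areaSum_eq_zero hv hx, areaSum_apply]
    rfl

theorem eq_comap_constSumZeroSubmodule (hL : IsLagrangian L)
    (h : ∀ l z, Pi.single l z ∈ L → z = 0) :
    ∃ σ f, (∀ l, AreaPreserving (f l)) ∧
      L = (constSumZeroSubmodule K (Fin 3)).comap (wreathMap σ f) := by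
  obtain ⟨u, hu, hu_ne, hu0⟩ := hL.exists_mem_apply_eq_zero (by simp) 0
  obtain ⟨w, hw, hw_ne, hw1⟩ := hL.exists_mem_apply_eq_zero (by simp) 1
  have hu2 : u 2 ≠ 0 := fun hu2 => hu_ne (eq_zero_of_forall_ne_apply_eq_zero (h 1) hu
    (by simp [Fin.forall_fin_succ, hu0, hu2]))
  have hw2 : w 2 ≠ 0 := fun hw2 => hw_ne (eq_zero_of_forall_ne_apply_eq_zero (h 0) hw
    (by simp [Fin.forall_fin_succ, hw1, hw2]))
  have hw0 : w 0 ≠ 0 := fun hw0 => hw_ne (eq_zero_of_forall_ne_apply_eq_zero (h 2) hw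
    (by simp [Fin.forall_fin_succ, hw0, hw1]))
  have pairing_u {x} (hx : x ∈ L) : area K (x 1) (u 1) + area K (x 2) (u 2) = 0 := by
    simpa only [areaSum_apply, Fin.sum_univ_three, hu0, map_zero, zero_add]
      using hL.areaSum_eq_zero hx hu
  have pairing_w {x} (hx : x ∈ L) : area K (x 0) (w 0) + area K (x 2) (w 2) = 0 := by
    simpa only [areaSum_apply, Fin.sum_univ_three, hw1, map_zero, add_zero]
      using hL.areaSum_eq_zero hx hw
  obtain ⟨c, hc⟩ : ∃ c : K, u 2 = c • w 2 :=
    exists_eq_smul_of_area_eq_zero hw2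
      (by simpa only [hw1, map_zero, LinearMap.zero_apply, zero_add] using pairing_u hw)
  have hc0 : c ≠ 0 := by
    rintro rfl
    exact hu2 (by rw [hc, zero_smul])
  obtain ⟨y, hy⟩ := exists_area_eq_one (smul_ne_zero hc0 hw0)
  obtain ⟨v, hv, hv0⟩ := hL.exists_mem_apply_eq (h 0) y
  -- Pairing `x` with `u` and with `-c • w` equates the areas in slots 1 and 0 with that in slot 2.
  have hb {x} (hx : x ∈ L) (l) :
      area K (x l) (![-c • w 0, -u 1, u 2] l) = area K (x 2) (u 2) := by
    fin_cases l
    · change area K (x 0) (-c • w 0) = _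
      rw [map_smul, smul_eq_mul, hc, map_smul, smul_eq_mul]
      linear_combination -c * pairing_w hx
    · change area K (x 1) (-u 1) = _
      rw [map_neg]
      linear_combination -pairing_u hx
    · rfl
  refine hL.eq_comap_constSumZeroSubmodule_of_area_eq (b := ![-c • w 0, -u 1, u 2]) hv
    (fun x hx l m => by rw [hb hx, hb hx]) fun l => ?_
  rw [hb hv, ← hb hv 0]
  change area K (v 0) (-c • w 0) = 1
  rw [hv0, area_swap, neg_smul, map_neg, LinearMap.neg_apply, neg_neg, hy]

theorem exists_eq_comap (hL : IsLagrangian L) :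
    ∃ σ f, (∀ l, AreaPreserving (f l)) ∧ (L = (axisSubmodule K (Fin 3)).comap (wreathMap σ f) ∨
      L = (graphSubmodule K).comap (wreathMap σ f) ∨
      L = (constSumZeroSubmodule K (Fin 3)).comap (wreathMap σ f)) := by
  by_cases all : ∀ l, ∃ z ≠ 0, Pi.single l z ∈ L
  · obtain ⟨σ, f, hf, h⟩ := hL.eq_comap_axisSubmodule all
    exact ⟨σ, f, hf, .inl h⟩
  push Not at all
  obtain ⟨m, hm⟩ := all
  by_cases some : ∃ l, ∃ z ≠ 0, Pi.single l z ∈ L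
  · obtain ⟨l, z, hz, hzL⟩ := some
    obtain ⟨σ, f, hf, h⟩ := hL.eq_comap_graphSubmodule hz hzL fun x => not_imp_not.1 (hm x)
    exact ⟨σ, f, hf, .inr (.inl h)⟩
  · push Not at some
    obtain ⟨σ, f, hf, h⟩ := hL.eq_comap_constSumZeroSubmodule fun l z => not_imp_not.1 (some l z)
    exact ⟨σ, f, hf, .inr (.inr h)⟩

end IsLagrangian

end SymplecticPlanes

section Groups

variable {G : Type*} [Group G]

theorem IsMaximalAbelian.centralizer_eq {H : Subgroup G} (hH : IsMaximalAbelian H) :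
    Subgroup.centralizer (H : Set G) = H := by
  have H_le : H ≤ Subgroup.centralizer (H : Set G) :=
    Subgroup.le_centralizer_iff_isMulCommutative.2 hH.1
  refine le_antisymm (fun g hg => ?_) H_le
  have comm : IsMulCommutative (Subgroup.closure (insert g (H : Set G))) := by
    refine Subgroup.isMulCommutative_closure ?_
    rintro x (rfl | hx) y (rfl | hy)
    · rfl
    · exact (hg y hy).symm
    · exact hg x hx
    · exact (H_le hy x hx)
  rw [← hH.2 _ comm fun h hh => Subgroup.subset_closure (.inr hh)]
  exact Subgroup.subset_closure (.inl rfl)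

/-- The homomorphism `i ↦ x ^ i` on `ZMod m`, for an element `x` with `x ^ m = 1`. -/
def zmodPow {m : ℕ} (x : G) (hx : x ^ m = 1) : ZMod m →+ Additive G :=
  ZMod.lift m ⟨zmultiplesHom (Additive G) (.ofMul x), by
    rw [zmultiplesHom_apply, natCast_zsmul, ← ofMul_pow, hx, ofMul_one]⟩

theorem zmodPow_intCast {m : ℕ} {x : G} (hx : x ^ m = 1) (k : ℤ) :
    (zmodPow x hx k).toMul = x ^ k := by
  rw [zmodPow, ZMod.lift_coe, zmultiplesHom_apply, toMul_zsmul, toMul_ofMul]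

theorem zmodPow_mul_of_mul_eq_mul_inv {m : ℕ} {x y : G} (hx : x ^ m = 1) (hxy : x * y = y * x⁻¹)
    (i : ZMod m) : (zmodPow x hx i).toMul * y = y * (zmodPow x hx (-i)).toMul := by
  obtain ⟨k, rfl⟩ := ZMod.intCast_surjective i
  have hconj : SemiconjBy y x⁻¹ x := hxy.symm
  rw [← Int.cast_neg, zmodPow_intCast, zmodPow_intCast, zpow_neg, ← inv_zpow]
  exact (hconj.zpow_right k).eq.symm

/-- The universal property of the dicyclic group
`⟨x, y | x ^ (2 * n) = 1, y ^ 2 = x ^ n, x * y = y * x⁻¹⟩`, with `a i ↦ x ^ i` and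
`xa i ↦ y * x ^ i`. -/
def quaternionLift {n : ℕ} (x y : G) (hx : x ^ (2 * n) = 1) (hy : y ^ 2 = x ^ n)
    (hxy : x * y = y * x⁻¹) : QuaternionGroup n →* G where
  toFun
    | .a i => (zmodPow x hx i).toMul
    | .xa i => y * (zmodPow x hx i).toMul
  map_one' := by
    change (zmodPow x hx 0).toMul = 1
    rw [map_zero, toMul_zero]
  map_mul' := by
    have y_mul_y : y * y = (zmodPow x hx n).toMul := by
      rw [← Int.cast_natCast, zmodPow_intCast, zpow_natCast, ← hy, sq]
    have pow_mul_y := zmodPow_mul_of_mul_eq_mul_inv hx hxy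
    rintro (i | i) (j | j)
    · simp only [QuaternionGroup.a_mul_a, map_add, toMul_add]
    · simp only [QuaternionGroup.a_mul_xa, sub_eq_neg_add, map_add, toMul_add]
      rw [← mul_assoc, ← mul_assoc, pow_mul_y]
    · simp only [QuaternionGroup.xa_mul_a, map_add, toMul_add, mul_assoc]
    · change (zmodPow x hx (n + j - i)).toMul =
        y * (zmodPow x hx i).toMul * (y * (zmodPow x hx j).toMul)
      rw [add_sub_assoc, sub_eq_neg_add]
      simp only [map_add, toMul_add]
      rw [← y_mul_y, mul_assoc y y, ← mul_assoc y (Additive.toMul _), ← pow_mul_y, mul_assoc,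
        mul_assoc]

theorem quaternionLift_a_one {n : ℕ} {x y : G} (hx : x ^ (2 * n) = 1) (hy : y ^ 2 = x ^ n)
    (hxy : x * y = y * x⁻¹) : quaternionLift x y hx hy hxy (.a 1) = x := by
  change (zmodPow x hx 1).toMul = x
  rw [← Int.cast_one, zmodPow_intCast, zpow_one]

theorem quaternionLift_xa_zero {n : ℕ} {x y : G} (hx : x ^ (2 * n) = 1) (hy : y ^ 2 = x ^ n)
    (hxy : x * y = y * x⁻¹) : quaternionLift x y hx hy hxy (.xa 0) = y := by
  change y * (zmodPow x hx 0).toMul = y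
  rw [map_zero, toMul_zero, mul_one]

end Groups

open QuaternionGroup

local notation "Q₈" => QuaternionGroup 2

section Quaternion

/-- The central element `(-1) ^ s` of `Q₈`. -/
def negOnePow (s : ZMod 2) : Q₈ := a 2 ^ s.val

theorem negOnePow_add : ∀ s t, negOnePow (s + t) = negOnePow s * negOnePow t := by decide

theorem negOnePow_inv : ∀ s, (negOnePow s)⁻¹ = negOnePow s := by decide

theorem negOnePow_injective : Function.Injective negOnePow := by decide

theorem negOnePow_mul_comm : ∀ s x, negOnePow s * x = x * negOnePow s := by decide

theorem exists_negOnePow_eq_iff : ∀ x, (∃ s, negOnePow s = x) ↔ x = 1 ∨ x = a 2 := by decide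

theorem mulAut_negOnePow (φ : MulAut Q₈) (s : ZMod 2) : φ (negOnePow s) = negOnePow s := by
  have unique_involution : ∀ x : Q₈, x * x = 1 → x ≠ 1 → x = a 2 := by decide
  have h : φ (a 2) = a 2 :=
    unique_involution _ (by rw [← map_mul]; exact map_one φ)
      ((map_ne_one_iff φ φ.injective).2 (by decide))
  rw [negOnePow, map_pow, h]

/-- The coordinates of the class of an element in `Q₈ / {1, -1}`, which is the plane over the field
with two elements, with respect to the basis given by the classes of `i = a 1` and `j = xa 0`. -/
def coord : Q₈ → ZMod 2 × ZMod 2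
  | a n => (n.cast, 0)
  | xa n => (n.cast, 1)

theorem coord_mul : ∀ x y, coord (x * y) = coord x + coord y := by decide

theorem coord_pow (x : Q₈) (n : ℕ) : coord (x ^ n) = n • coord x := by
  induction n with
  | zero => rw [pow_zero, zero_nsmul]; rfl
  | succ n ih => rw [pow_succ, coord_mul, ih, succ_nsmul]

theorem coord_surjective : Function.Surjective coord := by decide

theorem coord_eq_coord_iff :
    ∀ x y, coord x = coord y ↔ ∃ s, y = x * negOnePow s := by decide

theorem mul_eq_mul_mul_negOnePow_area :
    ∀ x y, y * x = x * y * negOnePow (area (ZMod 2) (coord x) (coord y)) := by decide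

theorem mem_zpowers_a_one_iff {x : Q₈} : x ∈ Subgroup.zpowers (a 1) ↔ (coord x).2 = 0 := by
  have orderOf_a_one : orderOf (a 1 : Q₈) = 4 := QuaternionGroup.orderOf_a_one
  rw [mem_zpowers_iff_mem_range_orderOf, orderOf_a_one]
  revert x
  decide

theorem AreaPreserving.exists_coord_mulAut {f : ZMod 2 × ZMod 2 →ₗ[ZMod 2] ZMod 2 × ZMod 2}
    (hf : AreaPreserving f) : ∃ φ : MulAut Q₈, ∀ x, coord (φ x) = f (coord x) := by
  obtain ⟨p, hp⟩ := coord_surjective (f (coord (a 1)))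
  obtain ⟨q, hq⟩ := coord_surjective (f (coord (xa 0)))
  have relations : ∀ p q : Q₈, area (ZMod 2) (coord p) (coord q) = 1 →
      p ^ 2 = a 2 ∧ q ^ 2 = a 2 ∧ p * q = q * p⁻¹ := by decide
  obtain ⟨hp2, hq2, hpq⟩ := relations p q (by rw [hp, hq, hf]; rfl)
  let φ : Q₈ →* Q₈ := quaternionLift p q (by rw [pow_mul, hp2]; rfl) (hq2.trans hp2.symm) hpq
  have φ_a_one : φ (a 1) = p := quaternionLift_a_one _ _ _
  have φ_xa_zero : φ (xa 0) = q := quaternionLift_xa_zero _ _ _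
  have coord_φ (x) : coord (φ x) = f (coord x) := by
    have exists_eq : ∀ x : Q₈, ∃ m n : Fin 4, x = xa 0 ^ (m : ℕ) * a 1 ^ (n : ℕ) := by decide
    obtain ⟨m, n, rfl⟩ := exists_eq x
    simp only [map_mul, map_pow, φ_a_one, φ_xa_zero, coord_mul, coord_pow, hp, hq, map_add,
      map_nsmul]
  have φ_injective : Function.Injective φ := by
    refine (injective_iff_map_eq_one φ).2 fun x hx => ?_
    have coord_x : coord 1 = coord x := hf.injective (by rw [← coord_φ, ← coord_φ, hx, map_one])
    obtain ⟨s, rfl⟩ := (coord_eq_coord_iff 1 x).1 coord_x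
    have φ_a_two : φ (a 2) = a 2 := by
      rw [show (a 2 : Q₈) = a 1 ^ 2 by decide, map_pow, φ_a_one, hp2]; rfl
    rw [one_mul] at hx ⊢
    rwa [negOnePow, map_pow, φ_a_two] at hx
  exact ⟨.ofBijective φ (Finite.injective_iff_bijective.1 φ_injective), coord_φ⟩

end Quaternion

open QuotientGroup (mk' mk'_surjective)

section CentralProducts

variable {ι : Type*}

/-- The family of signs `(-1) ^ ε l`, one in each copy of `Q₈`. -/
def signs (ε : ι → ZMod 2) : ι → Q₈ := fun l => negOnePow (ε l)

theorem signs_add (ε δ : ι → ZMod 2) : signs (ε + δ) = signs ε * signs δ :=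
  funext fun l => negOnePow_add (ε l) (δ l)

theorem signs_injective : Function.Injective (signs (ι := ι)) := fun _ _ h =>
  funext fun l => negOnePow_injective (congrFun h l)

theorem signs_mul_comm (ε : ι → ZMod 2) (t : ι → Q₈) : signs ε * t = t * signs ε :=
  funext fun l => negOnePow_mul_comm (ε l) (t l)

variable [Fintype ι]

variable (ι) in
/-- The group `K` of the sign vectors with product `1`. -/
def signKernel : Subgroup (ι → Q₈) where
  carrier := {t | ∃ ε : ι → ZMod 2, ∑ l, ε l = 0 ∧ signs ε = t}
  one_mem' := ⟨0, by simp, rfl⟩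
  mul_mem' := by
    rintro _ _ ⟨ε, hε, rfl⟩ ⟨δ, hδ, rfl⟩
    exact ⟨ε + δ, by simp [Finset.sum_add_distrib, hε, hδ], signs_add ε δ⟩
  inv_mem' := by
    rintro _ ⟨ε, hε, rfl⟩
    exact ⟨ε, hε, funext fun l => (negOnePow_inv (ε l)).symm⟩

instance : (signKernel ι).Normal where
  conj_mem := by
    rintro _ ⟨ε, hε, rfl⟩ t
    exact ⟨ε, hε, by rw [← signs_mul_comm, mul_inv_cancel_right]⟩

theorem eq_signKernel {K : Subgroup (Fin 3 → Q₈)}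
    (hK : ∀ t, t ∈ K ↔ ((∀ l, t l = 1 ∨ t l = a 2) ∧ t 0 * t 1 * t 2 = 1)) :
    K = signKernel (Fin 3) := by
  have prod_eq_one (ε : Fin 3 → ZMod 2) :
      signs ε 0 * signs ε 1 * signs ε 2 = 1 ↔ ∑ l, ε l = 0 := by
    simp only [signs, ← negOnePow_add, Fin.sum_univ_three]
    exact negOnePow_injective.eq_iff' rfl
  ext t
  simp only [hK, ← exists_negOnePow_eq_iff]
  constructor
  · rintro ⟨hsign, hprod⟩
    choose ε hε using hsign
    obtain rfl : signs ε = t := funext hε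
    exact ⟨ε, (prod_eq_one ε).1 hprod, rfl⟩
  · rintro ⟨ε, hε, rfl⟩
    exact ⟨fun l => ⟨ε l, rfl⟩, (prod_eq_one ε).2 hε⟩

variable (ι) in
/-- The central product of copies of `Q₈` indexed by `ι`; for three copies this is `G`. -/
abbrev CentralProduct : Type _ := (ι → Q₈) ⧸ signKernel ι

theorem mk_signs_eq_one_iff {ε : ι → ZMod 2} :
    mk' (signKernel ι) (signs ε) = 1 ↔ ∑ l, ε l = 0 := by
  rw [← MonoidHom.mem_ker, QuotientGroup.ker_mk']
  exact ⟨fun ⟨δ, hδ, h⟩ => signs_injective h ▸ hδ, fun h => ⟨ε, h, rfl⟩⟩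

namespace CentralProduct

/-- The class of an element of the central product modulo the center `{1, -1}`, which is a sum of
planes over the field with two elements. -/
def cls (g : CentralProduct ι) (l : ι) : ZMod 2 × ZMod 2 :=
  Quotient.liftOn' g (fun t => coord (t l)) fun s t hst => by
    obtain ⟨ε, -, hε⟩ := QuotientGroup.leftRel_apply.1 hst
    refine (coord_eq_coord_iff _ _).2 ⟨ε l, ?_⟩
    change t l = s l * signs ε l
    rw [hε, Pi.mul_apply, Pi.inv_apply, mul_inv_cancel_left]

theorem cls_mul (g h : CentralProduct ι) : cls (g * h) = cls g + cls h := by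
  obtain ⟨s, rfl⟩ := mk'_surjective _ g
  obtain ⟨t, rfl⟩ := mk'_surjective _ h
  exact funext fun l => coord_mul (s l) (t l)

theorem cls_one : cls (1 : CentralProduct ι) = 0 := rfl

theorem cls_inv (g : CentralProduct ι) : cls g⁻¹ = -cls g := by
  rw [eq_neg_iff_add_eq_zero, ← cls_mul, inv_mul_cancel, cls_one]

theorem cls_surjective : Function.Surjective (cls (ι := ι)) := by
  intro v
  choose t ht using fun l => coord_surjective (v l)
  exact ⟨mk' _ t, funext ht⟩

theorem cls_eq_zero_iff {g : CentralProduct ι} :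
    cls g = 0 ↔ ∃ ε, mk' (signKernel ι) (signs ε) = g := by
  constructor
  · obtain ⟨t, rfl⟩ := mk'_surjective _ g
    intro ht
    choose ε hε using fun l => (coord_eq_coord_iff 1 (t l)).1 (congrFun ht l).symm
    exact ⟨ε, by rw [show t = signs ε from funext fun l => (hε l).trans (one_mul _)]⟩
  · rintro ⟨ε, rfl⟩
    exact funext fun l => ((coord_eq_coord_iff 1 _).2 ⟨ε l, (one_mul _).symm⟩).symm

theorem eq_one_or_eq_of_cls_eq_zero {g z : CentralProduct ι} (hg : cls g = 0) (hz : cls z = 0)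
    (hz_ne : z ≠ 1) : g = 1 ∨ g = z := by
  obtain ⟨ε, rfl⟩ := cls_eq_zero_iff.1 hg
  obtain ⟨δ, rfl⟩ := cls_eq_zero_iff.1 hz
  rw [Ne, mk_signs_eq_one_iff] at hz_ne
  refine or_iff_not_imp_left.2 fun hg_ne => ?_
  rw [mk_signs_eq_one_iff] at hg_ne
  have eq_of_ne_zero : ∀ s t : ZMod 2, s ≠ 0 → t ≠ 0 → s = t := by decide
  rw [← sub_add_cancel ε δ, signs_add, map_mul, mk_signs_eq_one_iff.2, one_mul]
  simp only [Pi.sub_apply, Finset.sum_sub_distrib]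
  rw [eq_of_ne_zero _ _ hg_ne hz_ne, sub_self]

theorem mul_comm_iff {g h : CentralProduct ι} :
    g * h = h * g ↔ areaSum (ZMod 2) ι (cls g) (cls h) = 0 := by
  obtain ⟨s, rfl⟩ := mk'_surjective _ g
  obtain ⟨t, rfl⟩ := mk'_surjective _ h
  have mul_eq : t * s = s * t * signs fun l => area (ZMod 2) (coord (s l)) (coord (t l)) :=
    funext fun l => mul_eq_mul_mul_negOnePow_area (s l) (t l)
  rw [← map_mul, ← map_mul, mul_eq, map_mul _ (s * t), left_eq_mul, mk_signs_eq_one_iff,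
    areaSum_apply]
  rfl

/-- The subgroup of the central product, containing the center, that corresponds to a subspace of
the quotient by the center. -/
def liftSubgroup (L : Submodule (ZMod 2) (ι → ZMod 2 × ZMod 2)) : Subgroup (CentralProduct ι) where
  carrier := {g | cls g ∈ L}
  one_mem' := L.zero_mem
  mul_mem' {g h} hg hh := by
    change cls (g * h) ∈ L
    rw [cls_mul]
    exact L.add_mem hg hh
  inv_mem' {g} hg := by
    change cls g⁻¹ ∈ L
    rw [cls_inv]
    exact L.neg_mem hg

variable {L : Submodule (ZMod 2) (ι → ZMod 2 × ZMod 2)}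

theorem mem_liftSubgroup {g : CentralProduct ι} : g ∈ liftSubgroup L ↔ cls g ∈ L := .rfl

theorem exists_isLagrangian_eq_liftSubgroup {H : Subgroup (CentralProduct ι)}
    (hH : IsMaximalAbelian H) : ∃ L, IsLagrangian L ∧ H = liftSubgroup L := by
  let L := ⨅ h ∈ H, LinearMap.ker (areaSum (ZMod 2) ι (cls h))
  have mem_L {v} : v ∈ L ↔ ∀ h ∈ H, areaSum (ZMod 2) ι (cls h) v = 0 := by
    simp only [L, Submodule.mem_iInf, LinearMap.mem_ker]
  have mem_H {g} : g ∈ H ↔ cls g ∈ L := by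
    rw [mem_L, ← hH.centralizer_eq, Subgroup.mem_centralizer_iff]
    simp only [SetLike.mem_coe, mul_comm_iff, hH.centralizer_eq]
  refine ⟨L, Submodule.ext fun v => ?_, Subgroup.ext fun g => mem_H⟩
  rw [LinearMap.BilinForm.mem_orthogonal_iff, mem_L]
  refine ⟨fun hv h hh => hv _ (mem_H.1 hh), fun hv w hw => ?_⟩
  obtain ⟨h, rfl⟩ := cls_surjective w
  exact hv h (mem_H.2 hw)

theorem closure_eq_liftSubgroup_span {S : Set (CentralProduct ι)} {z : CentralProduct ι}
    (hz : cls z = 0) (hz_ne : z ≠ 1) (hzS : z ∈ Subgroup.closure S) :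
    Subgroup.closure S = liftSubgroup (Submodule.span (ZMod 2) (cls '' S)) := by
  refine le_antisymm ((Subgroup.closure_le _).2 fun g hg =>
    Submodule.subset_span (Set.mem_image_of_mem cls hg)) fun g hg => ?_
  have lift_span : ∀ v ∈ Submodule.span (ZMod 2) (cls '' S),
      ∃ h ∈ Subgroup.closure S, cls h = v := by
    intro v hv
    induction hv using Submodule.span_induction with
    | mem v hv =>
      obtain ⟨h, hh, rfl⟩ := hv
      exact ⟨h, Subgroup.subset_closure hh, rfl⟩
    | zero => exact ⟨1, one_mem _, rfl⟩
    | add _ _ _ _ ih ih' =>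
      obtain ⟨h, hh, rfl⟩ := ih
      obtain ⟨h', hh', rfl⟩ := ih'
      exact ⟨h * h', mul_mem hh hh', cls_mul h h'⟩
    | smul c _ _ ih =>
      obtain ⟨h, hh, rfl⟩ := ih
      fin_cases c
      · exact ⟨1, one_mem _, (zero_smul (ZMod 2) (cls h)).symm⟩
      · exact ⟨h, hh, (one_smul (ZMod 2) (cls h)).symm⟩
  obtain ⟨h, hh, hhg⟩ := lift_span (cls g) hg
  have cls_quotient : cls (h⁻¹ * g) = 0 := by rw [cls_mul, cls_inv, hhg, neg_add_cancel]
  rw [← mul_inv_cancel_left h g]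
  refine mul_mem hh ?_
  rcases eq_one_or_eq_of_cls_eq_zero cls_quotient hz hz_ne with h | h <;> rw [h]
  exacts [one_mem _, hzS]

variable (ι) in
/-- The subgroup of the automorphism group of the central product generated by the automorphisms
induced componentwise by automorphisms of `Q₈` and by permutations of the factors. -/
def wreathAuts : Subgroup (MulAut (CentralProduct ι)) :=
  Subgroup.closure {ψ |
    (∃ φ : ι → MulAut Q₈, ∀ t, ψ (mk' (signKernel ι) t) =
      mk' (signKernel ι) (fun l => φ l (t l))) ∨
    (∃ σ : Equiv.Perm ι, ∀ t, ψ (mk' (signKernel ι) t) =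
      mk' (signKernel ι) (fun l => t (σ l)))}

theorem map_signKernel_eq {e : MulAut (ι → Q₈)} {τ : Equiv.Perm (ι → ZMod 2)}
    (he : ∀ ε, e (signs ε) = signs (τ ε)) (hτ : ∀ ε, ∑ l, τ ε l = ∑ l, ε l) :
    (signKernel ι).map (e : (ι → Q₈) →* (ι → Q₈)) = signKernel ι := by
  refine le_antisymm ?_ ?_
  · rintro _ ⟨_, ⟨ε, hε, rfl⟩, rfl⟩
    exact ⟨τ ε, by rw [hτ, hε], (he ε).symm⟩
  · rintro _ ⟨ε, hε, rfl⟩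
    refine ⟨_, ⟨τ.symm ε, by rw [← hτ, τ.apply_symm_apply, hε], rfl⟩, ?_⟩
    exact (he _).trans (by rw [τ.apply_symm_apply])

theorem exists_mem_wreathAuts_of_mulAut (φ : ι → MulAut Q₈) :
    ∃ ψ ∈ wreathAuts ι, ∀ t, ψ (mk' (signKernel ι) t) =
      mk' (signKernel ι) (fun l => φ l (t l)) := by
  let e : MulAut (ι → Q₈) := MulEquiv.piCongrRight φ
  have he : (signKernel ι).map (e : (ι → Q₈) →* (ι → Q₈)) = signKernel ι :=
    map_signKernel_eq (τ := 1) (fun ε => funext fun l => mulAut_negOnePow (φ l) (ε l))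
      fun _ => rfl
  exact ⟨QuotientGroup.congr _ _ e he, Subgroup.subset_closure (.inl ⟨φ, fun _ => rfl⟩),
    fun _ => rfl⟩

theorem exists_mem_wreathAuts_of_perm (σ : Equiv.Perm ι) :
    ∃ ψ ∈ wreathAuts ι, ∀ t, ψ (mk' (signKernel ι) t) =
      mk' (signKernel ι) (fun l => t (σ l)) := by
  let e : MulAut (ι → Q₈) := MulEquiv.arrowCongr σ.symm (.refl _)
  have he : (signKernel ι).map (e : (ι → Q₈) →* (ι → Q₈)) = signKernel ι :=
    map_signKernel_eq (τ := σ.symm.arrowCongr (.refl _)) (fun _ => rfl) fun ε =>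
      Equiv.sum_comp σ ε
  exact ⟨QuotientGroup.congr _ _ e he, Subgroup.subset_closure (.inr ⟨σ, fun _ => rfl⟩),
    fun _ => rfl⟩

theorem exists_mem_wreathAuts_cls (σ : Equiv.Perm ι)
    {f : ι → ZMod 2 × ZMod 2 →ₗ[ZMod 2] ZMod 2 × ZMod 2} (hf : ∀ l, AreaPreserving (f l)) :
    ∃ ψ ∈ wreathAuts ι, ∀ g, cls (ψ g) = wreathMap σ f (cls g) := by
  choose φ hφ using fun l => (hf l).exists_coord_mulAut
  obtain ⟨ψ₁, hψ₁, hφψ₁⟩ := exists_mem_wreathAuts_of_mulAut φ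
  obtain ⟨ψ₂, hψ₂, hσψ₂⟩ := exists_mem_wreathAuts_of_perm σ
  refine ⟨ψ₁ * ψ₂, mul_mem hψ₁ hψ₂, fun g => ?_⟩
  obtain ⟨t, rfl⟩ := mk'_surjective _ g
  rw [MulAut.mul_apply, hσψ₂, hφψ₁]
  exact funext fun l => hφ l (t (σ l))

theorem exists_mem_wreathAuts_map_liftSubgroup_comap (σ : Equiv.Perm ι)
    {f : ι → ZMod 2 × ZMod 2 →ₗ[ZMod 2] ZMod 2 × ZMod 2} (hf : ∀ l, AreaPreserving (f l)) :
    ∃ ψ ∈ wreathAuts ι, ∀ M : Submodule (ZMod 2) (ι → ZMod 2 × ZMod 2),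
      (liftSubgroup (M.comap (wreathMap σ f))).map ψ.toMonoidHom = liftSubgroup M := by
  obtain ⟨ψ, hψ, hcls⟩ := exists_mem_wreathAuts_cls σ hf
  refine ⟨ψ, hψ, fun M => Subgroup.ext fun g => ?_⟩
  rw [Subgroup.mem_map_equiv, mem_liftSubgroup, mem_liftSubgroup, Submodule.mem_comap, ← hcls,
    MulEquiv.apply_symm_apply]

theorem map_mk_pi_zpowers_eq :
    (Subgroup.pi Set.univ fun _ => Subgroup.zpowers (a 1)).map (mk' (signKernel ι)) =
      liftSubgroup (axisSubmodule (ZMod 2) ι) := by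
  have mem_iff (t : ι → Q₈) : t ∈ Subgroup.pi Set.univ (fun _ => Subgroup.zpowers (a 1 : Q₈)) ↔
      mk' (signKernel ι) t ∈ liftSubgroup (axisSubmodule (ZMod 2) ι) := by
    simp only [Subgroup.mem_pi, Set.mem_univ, forall_const, mem_zpowers_a_one_iff]
    rfl
  ext g
  constructor
  · rintro ⟨t, ht, rfl⟩
    exact (mem_iff t).1 ht
  · obtain ⟨t, rfl⟩ := mk'_surjective _ g
    exact fun ht => ⟨t, (mem_iff t).2 ht, rfl⟩

theorem image_mk_eq_liftSubgroup_graphSubmodule :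
    mk' (signKernel (Fin 3)) '' {t | t 0 = t 1 ∧ t 2 ∈ Subgroup.zpowers (a 1)} =
      liftSubgroup (graphSubmodule (ZMod 2)) := by
  have graph_eq (x : ZMod 2 × ZMod 2) : (x.1, -x.2) = x := by rw [ZMod.neg_eq_self_mod_two]
  ext g
  constructor
  · rintro ⟨t, ⟨ht, ht2⟩, rfl⟩
    refine ⟨?_, mem_zpowers_a_one_iff.1 ht2⟩
    rw [graph_eq]
    exact congrArg coord ht.symm
  · obtain ⟨t, rfl⟩ := mk'_surjective _ g
    rintro ⟨ht, ht2⟩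
    rw [graph_eq] at ht
    obtain ⟨s, hs⟩ := (coord_eq_coord_iff _ _).1 ht
    refine ⟨t * signs ![0, s, s], ⟨?_, ?_⟩, ?_⟩
    · exact (mul_one (t 0)).trans hs
    · refine mem_zpowers_a_one_iff.2 (Eq.trans ?_ ht2)
      exact congrArg Prod.snd ((coord_eq_coord_iff (t 2) _).2 ⟨s, rfl⟩).symm
    · rw [map_mul, mk_signs_eq_one_iff.2, mul_one]
      simp [Fin.sum_univ_three, CharTwo.add_self_eq_zero]

theorem constSumZeroSubmodule_eq_span : constSumZeroSubmodule (ZMod 2) (Fin 3) =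
    .span (ZMod 2) {![(1, 0), (1, 0), (1, 0)], ![(0, 1), (0, 1), (1, 0)],
      ![(1, 0), (0, 1), (0, 1)]} := by
  refine le_antisymm ?_ (Submodule.span_le.2 ?_)
  · rintro v ⟨⟨s, hs⟩, hsum⟩
    have combination : ∀ s x y z : ZMod 2, x + y + z = 0 →
        (s + y) • ![(1, 0), (1, 0), (1, 0)] + x • ![(0, 1), (0, 1), (1, 0)] +
          z • ![(1, 0), (0, 1), (0, 1)] = ![(s + x, x), (s + y, y), (s + z, z)] := by decide
    have fst_eq (l) : s + (v l).2 = (v l).1 := by rw [← hs l, sub_add_cancel]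
    have v_eq : ![(s + (v 0).2, (v 0).2), (s + (v 1).2, (v 1).2), (s + (v 2).2, (v 2).2)] = v := by
      ext1 l
      fin_cases l <;> exact Prod.ext (fst_eq _) rfl
    rw [Fin.sum_univ_three] at hsum
    exact Submodule.mem_span_triple.2 ⟨_, _, _, (combination s _ _ _ hsum).trans v_eq⟩
  · rintro _ (rfl | rfl | rfl)
    · exact ⟨⟨1, by decide⟩, by decide⟩
    · exact ⟨⟨1, by decide⟩, by decide⟩
    · exact ⟨⟨1, by decide⟩, by decide⟩

theorem closure_eq_liftSubgroup_constSumZeroSubmodule :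
    Subgroup.closure {mk' (signKernel (Fin 3)) ![a 1, a 1, a 1],
      mk' (signKernel (Fin 3)) ![xa 0, xa 0, a 1], mk' (signKernel (Fin 3)) ![a 1, xa 0, xa 0]} =
      liftSubgroup (constSumZeroSubmodule (ZMod 2) (Fin 3)) := by
  have square_eq : (mk' (signKernel (Fin 3)) ![a 1, a 1, a 1]) ^ 2 =
      mk' (signKernel (Fin 3)) (signs 1) := by
    rw [← map_pow]
    exact congrArg _ (by decide)
  have square_ne_one : (mk' (signKernel (Fin 3)) ![a 1, a 1, a 1]) ^ 2 ≠ 1 := by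
    rw [square_eq, Ne, mk_signs_eq_one_iff]
    decide
  rw [closure_eq_liftSubgroup_span (cls_eq_zero_iff.2 ⟨1, square_eq.symm⟩) square_ne_one
    (pow_mem (Subgroup.subset_closure (by simp)) 2), constSumZeroSubmodule_eq_span]
  have cls_eq (x y z : Q₈) :
      cls (mk' (signKernel (Fin 3)) ![x, y, z]) = ![coord x, coord y, coord z] := by
    ext1 l
    fin_cases l <;> rfl
  simp only [Set.image_insert_eq, Set.image_singleton, cls_eq]
  rfl

end CentralProduct

end CentralProducts

/-- any maximal abelian subgroup of `G = (Q₈ × Q₈ × Q₈)/K` can be moved,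
by an automorphism of `G` lying in the subgroup of `Aut G` generated by those
automorphisms induced by triples of automorphisms of `Q₈` acting componentwise and
those induced by permutations of the three factors, onto one of three explicit
subgroups.  Here `Q₈ = QuaternionGroup 2`, `i = QuaternionGroup.a 1`,
`j = QuaternionGroup.xa 0`, `-1 = QuaternionGroup.a 2`. -/
theorem stmt_3 (K : Subgroup (Fin 3 → QuaternionGroup 2)) [K.Normal]
    (hK : ∀ t, t ∈ K ↔
      ((∀ l, t l = 1 ∨ t l = QuaternionGroup.a 2) ∧ t 0 * t 1 * t 2 = 1))
    (H : Subgroup ((Fin 3 → QuaternionGroup 2) ⧸ K))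
    (hH : IsMaximalAbelian H) :
    ∃ ψ : MulAut ((Fin 3 → QuaternionGroup 2) ⧸ K),
      ψ ∈ Subgroup.closure {ψ' : MulAut ((Fin 3 → QuaternionGroup 2) ⧸ K) |
        (∃ φ : Fin 3 → MulAut (QuaternionGroup 2),
          ∀ t, ψ' (QuotientGroup.mk' K t) = QuotientGroup.mk' K (fun l => φ l (t l))) ∨
        (∃ σ : Equiv.Perm (Fin 3),
          ∀ t, ψ' (QuotientGroup.mk' K t) = QuotientGroup.mk' K (fun l => t (σ l)))} ∧
      (Subgroup.map ψ.toMonoidHom H =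
          Subgroup.map (QuotientGroup.mk' K)
            (Subgroup.pi Set.univ fun _ => Subgroup.zpowers (QuaternionGroup.a 1)) ∨
       (Subgroup.map ψ.toMonoidHom H : Set ((Fin 3 → QuaternionGroup 2) ⧸ K)) =
          (QuotientGroup.mk' K) ''
            {t | t 0 = t 1 ∧ t 2 ∈ Subgroup.zpowers (QuaternionGroup.a 1)} ∨
       Subgroup.map ψ.toMonoidHom H =
          Subgroup.closure
            {QuotientGroup.mk' K
                ![QuaternionGroup.a 1, QuaternionGroup.a 1, QuaternionGroup.a 1],
             QuotientGroup.mk' K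
                ![QuaternionGroup.xa 0, QuaternionGroup.xa 0, QuaternionGroup.a 1],
             QuotientGroup.mk' K
                ![QuaternionGroup.a 1, QuaternionGroup.xa 0, QuaternionGroup.xa 0]}) := by
  obtain rfl := eq_signKernel hK
  obtain ⟨L, hL, rfl⟩ := CentralProduct.exists_isLagrangian_eq_liftSubgroup hH
  obtain ⟨σ, f, hf, hLσ⟩ := hL.exists_eq_comap
  obtain ⟨ψ, hψ, map_eq⟩ := CentralProduct.exists_mem_wreathAuts_map_liftSubgroup_comap σ hf
  refine ⟨ψ, hψ, ?_⟩
  rcases hLσ with rfl | rfl | rfl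
  · left
    rw [map_eq, CentralProduct.map_mk_pi_zpowers_eq]
  · right; left
    rw [map_eq, CentralProduct.image_mk_eq_liftSubgroup_graphSubmodule]
  · right; right
    rw [map_eq, CentralProduct.closure_eq_liftSubgroup_constSumZeroSubmodule]
end

section
/- Let F be an algebraically closed field of characteristic 0, let U be a finite-dimensional F-vector space of odd dimension, and let Q be a nondegenerate quadratic form on U with polar form b_Q(u,v) = Q(u+v) − Q(u) − Q(v). Let u, v ∈ U satisfy Q(u) = Q(v) = 0 and b_Q(u,v) = 1, and let U' = {w ∈ U : b_Q(u,w) = 0 and b_Q(v,w) = 0} with Q' the restriction of Q to U'. Then the even Clifford algebra Cl₀(U,Q) is isomorphic as an F-algebra to Mat₂(F) ⊗_F Cl₀(U',Q'). -/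
open scoped TensorProduct

/-!
For the orthogonal sum of the hyperbolic plane `(s, t) ↦ s * t` and a form `Q`, the assignment
`((s, t), w) ↦ !![ι w, s; t, -ι w]` induces `Cl ≃ Mat₂(Cl Q)`: the isotropic vectors of the plane
satisfy the relations of one fermionic mode and so provide the matrix units, and multiplying `ι w`
by their commutator makes it commute with both of them.

The grading does not match the entrywise one: on the image of a vector the diagonal entries are odd
but the off-diagonal ones are even. If `Cl Q` has an odd unit `e`, conjugation by `diag(1, e)`
repairs this, so that the even subalgebra is carried onto `Mat₂(Cl₀ Q)`. A vector on which `Q` is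
invertible is such a unit, and over a field a nonzero nondegenerate complement of a hyperbolic plane
contains one.
-/

section MatrixUnits

variable {R A n : Type*} [CommSemiring R] [Semiring A] [Algebra R A] [Fintype n] [DecidableEq n]

/-- A full system of `n × n` matrix units in a semiring, written as a matrix `E` of elements. -/
structure IsMatrixUnits (E : Matrix n n A) : Prop where
  mul_eq_ite (i j k l : n) : E i j * E k l = if j = k then E i l else 0
  trace_eq_one : E.trace = 1

namespace IsMatrixUnits

variable {E : Matrix n n A}

theorem mul_sum_smul (hE : IsMatrixUnits E) (N : Matrix n n R) (i j : n) :
    E i j * ∑ k, ∑ l, N k l • E k l = ∑ l, N j l • E i l := by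
  simp only [Finset.mul_sum, mul_smul_comm, hE.mul_eq_ite, smul_ite, smul_zero,
    Finset.sum_ite_irrel, Finset.sum_const_zero, Finset.sum_ite_eq, Finset.mem_univ, if_true]

/-- The algebra homomorphism from the matrix algebra which sends the elementary matrices to a given
system of matrix units. -/
def lift (R : Type*) [CommSemiring R] [Algebra R A] (hE : IsMatrixUnits E) :
    Matrix n n R →ₐ[R] A :=
  AlgHom.ofLinearMap
    { toFun := fun M => ∑ i, ∑ j, M i j • E i j
      map_add' := fun M N => by simp only [Matrix.add_apply, add_smul, Finset.sum_add_distrib]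
      map_smul' := fun r M => by
        simp only [Matrix.smul_apply, smul_eq_mul, mul_smul, Finset.smul_sum, RingHom.id_apply] }
    (by simpa [Matrix.one_apply, ite_smul, Matrix.trace] using hE.trace_eq_one)
    (fun M N => by
      simp only [LinearMap.coe_mk, AddHom.coe_mk, Finset.sum_mul (s := Finset.univ),
        smul_mul_assoc, hE.mul_sum_smul, Matrix.mul_apply, Finset.sum_smul, Finset.smul_sum,
        mul_smul]
      exact Finset.sum_congr rfl fun i _ => Finset.sum_comm)

theorem lift_apply (hE : IsMatrixUnits E) (M : Matrix n n R) :
    hE.lift R M = ∑ i, ∑ j, M i j • E i j :=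
  rfl

end IsMatrixUnits

end MatrixUnits

section MatrixSubalgebra

variable {R A n κ : Type*} [CommSemiring R] [Semiring A] [Algebra R A] [Fintype n] [DecidableEq n]

instance matrixGradedMonoid [AddMonoid κ] (𝒜 : κ → Submodule R A) [SetLike.GradedMonoid 𝒜] :
    SetLike.GradedMonoid fun k => ((𝒜 k).matrix : Submodule R (Matrix n n A)) where
  one_mem i j := by
    by_cases hij : i = j
    · rw [hij, Matrix.one_apply_eq]
      exact SetLike.one_mem_graded 𝒜
    · rw [Matrix.one_apply_ne hij]
      exact zero_mem _
  mul_mem k l M N hM hN i j :=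
    Submodule.sum_mem _ fun m _ => SetLike.mul_mem_graded (A := 𝒜) (hM i m) (hN m j)

theorem disjoint_submodule_matrix {m : Type*} {p q : Submodule R A} (h : Disjoint p q) :
    Disjoint (p.matrix : Submodule R (Matrix m m A)) q.matrix :=
  Submodule.disjoint_def.2 fun M hp hq => Matrix.ext fun i j =>
    Submodule.disjoint_def.1 h (M i j) (hp i j) (hq i j)

/-- Matrices over a subalgebra `S` of `A`, identified with the matrices over `A` whose entries all
lie in `S`. -/
noncomputable def subalgebraMatrixEquiv (S : Subalgebra R A) :
    Matrix n n S ≃ₐ[R] (S.matrix : Subalgebra R (Matrix n n A)) :=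
  (AlgEquiv.ofInjective S.val.mapMatrix (Matrix.map_injective Subtype.val_injective)).trans
    (Subalgebra.equivOfEq _ _ (by
      ext M
      refine ⟨?_, fun hM => ⟨fun i j => ⟨M i j, hM i j⟩, rfl⟩⟩
      rintro ⟨N, rfl⟩ i j
      exact (N i j).2))

end MatrixSubalgebra

section AlgEquiv

variable {R A B : Type*} [CommSemiring R] [Semiring A] [Algebra R A] [Semiring B] [Algebra R B]

/-- The restriction of an algebra equivalence to a subalgebra `S`, onto a subalgebra `T` that has
`S` as its preimage. -/
noncomputable def subalgebraEquivOfMemIff (f : A ≃ₐ[R] B) {S : Subalgebra R A}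
    {T : Subalgebra R B} (h : ∀ x, x ∈ S ↔ f x ∈ T) : S ≃ₐ[R] T :=
  (f.subalgebraMap S).trans (Subalgebra.equivOfEq _ _ (by
    ext y
    refine ⟨?_, fun hy => ⟨f.symm y, (h _).2 (by simpa using hy), f.apply_symm_apply y⟩⟩
    rintro ⟨x, hx, rfl⟩
    exact (h x).1 hx))

end AlgEquiv

section Parity

variable {R A : Type*} [CommRing R] [Ring A] [Algebra R A]

theorem units_inv_mem_odd (𝒜 : ZMod 2 → Submodule R A) [SetLike.GradedMonoid 𝒜]
    (hcompl : IsCompl (𝒜 0) (𝒜 1)) {e : Aˣ} (he : (e : A) ∈ 𝒜 1) : (↑e⁻¹ : A) ∈ 𝒜 1 := by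
  obtain ⟨x₀, hx₀, x₁, hx₁, hx⟩ := Submodule.mem_sup.1
    (hcompl.sup_eq_top ▸ Submodule.mem_top : (↑e⁻¹ : A) ∈ 𝒜 0 ⊔ 𝒜 1)
  have hodd : (e : A) * x₀ ∈ 𝒜 1 := by
    simpa using SetLike.mul_mem_graded he hx₀
  have hone : (e : A) * x₀ = 1 - e * x₁ := by
    rw [eq_sub_iff_add_eq, ← mul_add, hx, e.mul_inv]
  have heven : (e : A) * x₀ ∈ 𝒜 0 := by
    rw [hone]
    refine sub_mem (SetLike.one_mem_graded 𝒜) ?_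
    simpa only [CharTwo.add_self_eq_zero] using SetLike.mul_mem_graded he hx₁
  have hx₀_zero : x₀ = 0 :=
    e.mul_right_eq_zero.1 (Submodule.disjoint_def.1 hcompl.disjoint _ heven hodd)
  rwa [← hx, hx₀_zero, zero_add]

end Parity

section FermionPair

variable {A : Type*} [Ring A] {a b : A}

/-- The canonical anticommutation relations of a single fermionic mode. -/
structure IsFermionPair (a b : A) : Prop where
  left_mul_self : a * a = 0
  right_mul_self : b * b = 0
  anticomm : a * b + b * a = 1

namespace IsFermionPair

theorem symm (h : IsFermionPair a b) : IsFermionPair b a :=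
  ⟨h.right_mul_self, h.left_mul_self, by rw [add_comm, h.anticomm]⟩

theorem mul_mul_left (h : IsFermionPair a b) : a * b * a = a := by
  rw [eq_sub_of_add_eq h.anticomm, sub_mul, one_mul, mul_assoc, h.left_mul_self, mul_zero, sub_zero]

theorem isMatrixUnits (h : IsFermionPair a b) : IsMatrixUnits !![a * b, a; b, b * a] where
  mul_eq_ite i j k l := by
    have haa := h.left_mul_self
    have hbb := h.right_mul_self
    have haba := h.mul_mul_left
    have hbab := h.symm.mul_mul_left
    have haab : a * (a * b) = 0 := by rw [← mul_assoc, haa, zero_mul]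
    have hbba : b * (b * a) = 0 := by rw [← mul_assoc, hbb, zero_mul]
    rw [mul_assoc] at haba hbab
    fin_cases i <;> fin_cases j <;> fin_cases k <;> fin_cases l <;>
      simp [mul_assoc, haa, hbb, haba, hbab, haab, hbba]
  trace_eq_one := by simpa [Matrix.trace_fin_two] using h.anticomm

theorem commutator_mul_self (h : IsFermionPair a b) : (a * b - b * a) * (a * b - b * a) = 1 := by
  have hE := h.isMatrixUnits.mul_eq_ite
  have h₀₀ : a * b * (a * b) = a * b := by simpa using hE 0 0 0 0
  have h₀₁ : a * b * (b * a) = 0 := by simpa using hE 0 0 1 1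
  have h₁₀ : b * a * (a * b) = 0 := by simpa using hE 1 1 0 0
  have h₁₁ : b * a * (b * a) = b * a := by simpa using hE 1 1 1 1
  rw [sub_mul, mul_sub, mul_sub, h₀₀, h₀₁, h₁₀, h₁₁, sub_zero, zero_sub, sub_neg_eq_add, h.anticomm]

theorem commutator_mul_left (h : IsFermionPair a b) : (a * b - b * a) * a = a := by
  rw [sub_mul, h.mul_mul_left, mul_assoc, h.left_mul_self, mul_zero, sub_zero]

theorem left_mul_commutator (h : IsFermionPair a b) : a * (a * b - b * a) = -a := by
  rw [mul_sub, ← mul_assoc, h.left_mul_self, zero_mul, ← mul_assoc, h.mul_mul_left, zero_sub]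

theorem commute_commutator_mul_left (h : IsFermionPair a b) {x : A} (hx : x * a = -(a * x)) :
    Commute ((a * b - b * a) * x) a := by
  rw [commute_iff_eq, mul_assoc, hx, mul_neg, ← mul_assoc, h.commutator_mul_left, ← mul_assoc,
    h.left_mul_commutator, neg_mul]

theorem commute_commutator_mul_right (h : IsFermionPair a b) {x : A} (hx : x * b = -(b * x)) :
    Commute ((a * b - b * a) * x) b := by
  rw [← neg_sub (b * a), neg_mul]
  exact (h.symm.commute_commutator_mul_left hx).neg_left

end IsFermionPair

end FermionPair

section CliffordParity

open CliffordAlgebra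

variable {R U : Type*} [CommRing R] [AddCommGroup U] [Module R U] {Q : QuadraticForm R U}

theorem evenOdd_le_comap {A : Type*} [Semiring A] [Algebra R A] (𝒜 : ZMod 2 → Submodule R A)
    [SetLike.GradedMonoid 𝒜] {f : CliffordAlgebra Q →ₐ[R] A} (hf : ∀ m, f (ι Q m) ∈ 𝒜 1)
    (k : ZMod 2) : evenOdd Q k ≤ (𝒜 k).comap f.toLinearMap := by
  refine iSup_le ?_
  rintro ⟨n, hn⟩ y hy
  subst hn
  dsimp only at hy
  induction hy using Submodule.pow_induction_on_left' with
  | algebraMap r => simpa using SetLike.algebraMap_mem_graded 𝒜 r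
  | add x y i _ _ ihx ihy => exact add_mem ihx ihy
  | mem_mul m hm i x _ ih =>
    obtain ⟨m, rfl⟩ := hm
    simpa [add_comm] using SetLike.mul_mem_graded (hf m) ih

theorem mem_even_iff_map_mem {A : Type*} [Ring A] [Algebra R A] (𝒜 : ZMod 2 → Submodule R A)
    [SetLike.GradedMonoid 𝒜] (hdisj : Disjoint (𝒜 0) (𝒜 1)) {f : CliffordAlgebra Q →ₐ[R] A}
    (hinj : Function.Injective f) (hf : ∀ m, f (ι Q m) ∈ 𝒜 1) {x : CliffordAlgebra Q} :
    x ∈ even Q ↔ f x ∈ 𝒜 0 := by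
  refine ⟨fun hx => evenOdd_le_comap 𝒜 hf 0 hx, fun hx => ?_⟩
  obtain ⟨x₀, hx₀, x₁, hx₁, rfl⟩ := Submodule.mem_sup.1
    ((evenOdd_isCompl Q).sup_eq_top ▸ Submodule.mem_top : x ∈ evenOdd Q 0 ⊔ evenOdd Q 1)
  have hfx₁ : f x₁ ∈ 𝒜 0 := by
    simpa using sub_mem hx (evenOdd_le_comap 𝒜 hf 0 hx₀)
  have hfx₁_zero : f x₁ = 0 :=
    Submodule.disjoint_def.1 hdisj _ hfx₁ (evenOdd_le_comap 𝒜 hf 1 hx₁)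
  rw [(map_eq_zero_iff f hinj).1 hfx₁_zero, add_zero]
  exact hx₀

variable {V : Type*} [AddCommGroup V] [Module R V] {Q₁ : QuadraticForm R V}

/-- Isometric quadratic forms have isomorphic even Clifford algebras. -/
noncomputable def evenEquivOfIsometry (g : Q.IsometryEquiv Q₁) : even Q ≃ₐ[R] even Q₁ :=
  subalgebraEquivOfMemIff (equivOfIsometry g) fun _ =>
    mem_even_iff_map_mem (f := (equivOfIsometry g).toAlgHom) (evenOdd Q₁)
      (evenOdd_isCompl Q₁).disjoint (equivOfIsometry g).injective fun m => by
        simpa using ι_mem_evenOdd_one Q₁ (g m)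

end CliffordParity

section HyperbolicSum

open CliffordAlgebra

variable {R W : Type*} [CommRing R] [AddCommGroup W] [Module R W]

/-- The orthogonal sum of the hyperbolic plane `(s, t) ↦ s * t` and the quadratic form `Q`. -/
def hyperbolicSum (Q : QuadraticForm R W) : QuadraticForm R ((R × R) × W) :=
  (QuadraticMap.linMulLin (LinearMap.fst R R R) (LinearMap.snd R R R)).prod Q

namespace hyperbolicSum

variable (Q : QuadraticForm R W)

theorem apply (m : (R × R) × W) : hyperbolicSum Q m = m.1.1 * m.1.2 + Q m.2 :=
  rfl

/-- The linear map whose Clifford lift is `hyperbolicSum.toMatrix`. -/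
def vectorMatrix : (R × R) × W →ₗ[R] Matrix (Fin 2) (Fin 2) (CliffordAlgebra Q) where
  toFun m := !![ι Q m.2, algebraMap R _ m.1.1; algebraMap R _ m.1.2, -ι Q m.2]
  map_add' x y := by simp [add_comm]
  map_smul' r x := by simp [Matrix.smul_of, Algebra.algebraMap_eq_smul_one, mul_smul]

theorem vectorMatrix_mul_self (m : (R × R) × W) :
    vectorMatrix Q m * vectorMatrix Q m = algebraMap R _ (hyperbolicSum Q m) := by
  obtain ⟨⟨s, t⟩, w⟩ := m
  ext i j
  fin_cases i <;> fin_cases j <;>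
    simp [vectorMatrix, apply, Matrix.algebraMap_matrix_apply, Algebra.algebraMap_eq_smul_one,
      add_smul, mul_smul, add_comm, smul_comm t s]

/-- The two-by-two matrix model of the Clifford algebra of `hyperbolicSum Q`. -/
def toMatrix :
    CliffordAlgebra (hyperbolicSum Q) →ₐ[R] Matrix (Fin 2) (Fin 2) (CliffordAlgebra Q) :=
  CliffordAlgebra.lift _ ⟨vectorMatrix Q, vectorMatrix_mul_self Q⟩

theorem toMatrix_ι (m : (R × R) × W) : toMatrix Q (ι _ m) =
    !![ι Q m.2, algebraMap R _ m.1.1; algebraMap R _ m.1.2, -ι Q m.2] :=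
  lift_ι_apply _ _ _

local notation "u₀" => ι (hyperbolicSum Q) ((1, 0), 0)
local notation "v₀" => ι (hyperbolicSum Q) ((0, 1), 0)

theorem isFermionPair : IsFermionPair u₀ v₀ where
  left_mul_self := by simp [apply]
  right_mul_self := by simp [apply]
  anticomm := by simp [ι_mul_ι_add_swap, QuadraticMap.polar, apply]

theorem ι_inr_mul_ι_inl (w : W) (p : R × R) :
    ι (hyperbolicSum Q) (0, w) * ι (hyperbolicSum Q) (p, 0) =
      -(ι (hyperbolicSum Q) (p, 0) * ι (hyperbolicSum Q) (0, w)) :=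
  ι_mul_ι_comm_of_isOrtho (.inr_inl _ _)

theorem commute_commutator_ι_inr (w : W) :
    Commute (u₀ * v₀ - v₀ * u₀) (ι (hyperbolicSum Q) (0, w)) := by
  have hpq (p q : R × R) : Commute (ι (hyperbolicSum Q) (p, 0) * ι (hyperbolicSum Q) (q, 0))
      (ι (hyperbolicSum Q) (0, w)) := by
    rw [commute_iff_eq, ← mul_assoc, ι_inr_mul_ι_inl, neg_mul, mul_assoc, mul_assoc,
      ι_inr_mul_ι_inl, mul_neg, neg_neg]
  exact (hpq _ _).sub_left (hpq _ _)

/-- The embedding of the Clifford algebra of `Q` into the commutant of the hyperbolic plane. Vectors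
of `W` anticommute with the plane, hence the twist by the commutator. -/
def ofBase : CliffordAlgebra Q →ₐ[R] CliffordAlgebra (hyperbolicSum Q) :=
  CliffordAlgebra.lift Q ⟨LinearMap.mulLeft R (u₀ * v₀ - v₀ * u₀) ∘ₗ ι _ ∘ₗ LinearMap.inr R _ W,
    fun w => by
      simp only [LinearMap.comp_apply, LinearMap.inr_apply, LinearMap.mulLeft_apply]
      rw [(commute_commutator_ι_inr Q w).symm.mul_mul_mul_comm,
        (isFermionPair Q).commutator_mul_self, one_mul, ι_sq_scalar]
      simp [apply]⟩

theorem ofBase_ι (w : W) :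
    ofBase Q (ι Q w) = (u₀ * v₀ - v₀ * u₀) * ι (hyperbolicSum Q) (0, w) :=
  lift_ι_apply _ _ _

theorem commute_ofBase {c : CliffordAlgebra (hyperbolicSum Q)}
    (hc : ∀ w, Commute ((u₀ * v₀ - v₀ * u₀) * ι (hyperbolicSum Q) (0, w)) c)
    (x : CliffordAlgebra Q) : Commute (ofBase Q x) c := by
  induction x using CliffordAlgebra.induction with
  | algebraMap r => rw [AlgHom.commutes]; exact Algebra.commute_algebraMap_left r c
  | ι w => rw [ofBase_ι]; exact hc w
  | mul x y hx hy => rw [map_mul]; exact hx.mul_left hy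
  | add x y hx hy => rw [map_add]; exact hx.add_left hy

theorem commute_ofBase_lift (x : CliffordAlgebra Q) (M : Matrix (Fin 2) (Fin 2) R) :
    Commute (ofBase Q x) ((isFermionPair Q).isMatrixUnits.lift R M) := by
  have hu : Commute (ofBase Q x) u₀ := commute_ofBase Q
    (fun w => (isFermionPair Q).commute_commutator_mul_left (ι_inr_mul_ι_inl Q w _)) x
  have hv : Commute (ofBase Q x) v₀ := commute_ofBase Q
    (fun w => (isFermionPair Q).commute_commutator_mul_right (ι_inr_mul_ι_inl Q w _)) x
  rw [IsMatrixUnits.lift_apply]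
  refine Commute.sum_right _ _ _ fun i _ => Commute.sum_right _ _ _ fun j _ =>
    Commute.smul_right ?_ (M i j)
  fin_cases i <;> fin_cases j
  exacts [hu.mul_right hv, hu, hv, hv.mul_right hu]

/-- The inverse of `hyperbolicSum.toMatrix`, built from the matrix units of the hyperbolic plane
and the embedding `hyperbolicSum.ofBase`. -/
noncomputable def ofMatrix :
    Matrix (Fin 2) (Fin 2) (CliffordAlgebra Q) →ₐ[R] CliffordAlgebra (hyperbolicSum Q) :=
  (Algebra.TensorProduct.lift (ofBase Q) ((isFermionPair Q).isMatrixUnits.lift R)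
    (commute_ofBase_lift Q)).comp (matrixEquivTensor (Fin 2) R (CliffordAlgebra Q)).toAlgHom

theorem ofMatrix_apply (M : Matrix (Fin 2) (Fin 2) (CliffordAlgebra Q)) :
    ofMatrix Q M = ofBase Q (M 0 0) * (u₀ * v₀) + ofBase Q (M 0 1) * u₀ +
      ofBase Q (M 1 0) * v₀ + ofBase Q (M 1 1) * (v₀ * u₀) := by
  simp [ofMatrix, matrixEquivTensor_apply, Fintype.sum_prod_type, IsMatrixUnits.lift_apply,
    Matrix.single_apply, add_assoc]

theorem ofMatrix_toMatrix_ι_inr (w : W) :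
    ofMatrix Q (toMatrix Q (ι _ (0, w))) = ι _ (0, w) := by
  calc
    ofMatrix Q (toMatrix Q (ι _ (0, w)))
      = ofBase Q (ι Q w) * (u₀ * v₀) - ofBase Q (ι Q w) * (v₀ * u₀) := by
        simp [ofMatrix_apply, toMatrix_ι, sub_eq_add_neg]
    _ = (u₀ * v₀ - v₀ * u₀) * (ι _ (0, w) * (u₀ * v₀ - v₀ * u₀)) := by
        rw [← mul_sub, ofBase_ι, mul_assoc]
    _ = ι _ (0, w) := by
        rw [← (commute_commutator_ι_inr Q w).eq, ← mul_assoc,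
          (isFermionPair Q).commutator_mul_self, one_mul]

theorem ofMatrix_toMatrix (x : CliffordAlgebra (hyperbolicSum Q)) :
    ofMatrix Q (toMatrix Q x) = x := by
  suffices (ofMatrix Q).comp (toMatrix Q) = AlgHom.id R _ from DFunLike.congr_fun this x
  ext w
  · simp [toMatrix_ι, ofMatrix_apply]
  · simp [toMatrix_ι, ofMatrix_apply]
  · exact ofMatrix_toMatrix_ι_inr Q w

theorem toMatrix_ofBase (x : CliffordAlgebra Q) :
    toMatrix Q (ofBase Q x) = Matrix.scalar _ x := by
  suffices (toMatrix Q).comp (ofBase Q) = Matrix.scalarAlgHom (Fin 2) R from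
    DFunLike.congr_fun this x
  ext w i j
  fin_cases i <;> fin_cases j <;> simp [toMatrix_ι, ofBase_ι]

theorem toMatrix_ofMatrix (M : Matrix (Fin 2) (Fin 2) (CliffordAlgebra Q)) :
    toMatrix Q (ofMatrix Q M) = M := by
  ext i j
  fin_cases i <;> fin_cases j <;> simp [ofMatrix_apply, toMatrix_ofBase, toMatrix_ι]

/-- Adding a hyperbolic plane replaces the full Clifford algebra by its two-by-two matrices. -/
noncomputable def equivMatrix :
    CliffordAlgebra (hyperbolicSum Q) ≃ₐ[R] Matrix (Fin 2) (Fin 2) (CliffordAlgebra Q) :=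
  AlgEquiv.ofAlgHom (toMatrix Q) (ofMatrix Q) (AlgHom.ext (toMatrix_ofMatrix Q))
    (AlgHom.ext (ofMatrix_toMatrix Q))

end hyperbolicSum

end HyperbolicSum

section EvenHyperbolicSum

open CliffordAlgebra

/-- The unit `diag(1, e)` of the two-by-two matrix ring. -/
def diagonalOneUnit {A : Type*} [Ring A] (e : Aˣ) : (Matrix (Fin 2) (Fin 2) A)ˣ where
  val := !![1, 0; 0, ↑e]
  inv := !![1, 0; 0, ↑e⁻¹]
  val_inv := by simp [Matrix.one_fin_two]
  inv_val := by simp [Matrix.one_fin_two]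

namespace hyperbolicSum

variable {R W : Type*} [CommRing R] [AddCommGroup W] [Module R W] (Q : QuadraticForm R W)
  (e : (CliffordAlgebra Q)ˣ)

/-- The matrix model `hyperbolicSum.equivMatrix` conjugated by `diag(1, e)`. For odd `e` it respects
the entrywise grading of the matrices. -/
noncomputable def twistedEquivMatrix :
    CliffordAlgebra (hyperbolicSum Q) ≃ₐ[R] Matrix (Fin 2) (Fin 2) (CliffordAlgebra Q) :=
  (equivMatrix Q).trans (MulSemiringAction.toAlgEquiv R _ (ConjAct.toConjAct (diagonalOneUnit e)))

theorem twistedEquivMatrix_ι (m : (R × R) × W) : twistedEquivMatrix Q e (ι _ m) =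
    !![ι Q m.2, m.1.1 • ↑e⁻¹; m.1.2 • ↑e, -(e * ι Q m.2 * ↑e⁻¹)] := by
  change (diagonalOneUnit e).val * toMatrix Q (ι _ m) * (diagonalOneUnit e).inv = _
  rw [toMatrix_ι]
  simp [diagonalOneUnit, Algebra.algebraMap_eq_smul_one]

variable {e}

theorem twistedEquivMatrix_ι_mem (he : (e : CliffordAlgebra Q) ∈ evenOdd Q 1) (m : (R × R) × W) :
    twistedEquivMatrix Q e (ι _ m) ∈ (evenOdd Q 1).matrix := by
  have hm := ι_mem_evenOdd_one Q m.2
  have he_inv := units_inv_mem_odd (evenOdd Q) (evenOdd_isCompl Q) he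
  rw [twistedEquivMatrix_ι]
  intro i j
  fin_cases i <;> fin_cases j
  · exact hm
  · exact Submodule.smul_mem _ _ he_inv
  · exact Submodule.smul_mem _ _ he
  · have hconj := SetLike.mul_mem_graded (SetLike.mul_mem_graded he hm) he_inv
    simp only [CharTwo.add_self_eq_zero, zero_add] at hconj
    exact Submodule.neg_mem _ hconj

theorem mem_even_iff_twistedEquivMatrix_mem (he : (e : CliffordAlgebra Q) ∈ evenOdd Q 1)
    (x : CliffordAlgebra (hyperbolicSum Q)) :
    x ∈ even (hyperbolicSum Q) ↔ twistedEquivMatrix Q e x ∈ (even Q).matrix :=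
  mem_even_iff_map_mem (f := (twistedEquivMatrix Q e).toAlgHom) (fun k => (evenOdd Q k).matrix)
    (disjoint_submodule_matrix (evenOdd_isCompl Q).disjoint) (twistedEquivMatrix Q e).injective
    (twistedEquivMatrix_ι_mem Q he)

/-- If the Clifford algebra of `Q` has an odd unit, adding a hyperbolic plane replaces the even
Clifford algebra by its two-by-two matrices. -/
noncomputable def evenEquivTensor (he : (e : CliffordAlgebra Q) ∈ evenOdd Q 1) :
    even (hyperbolicSum Q) ≃ₐ[R] Matrix (Fin 2) (Fin 2) R ⊗[R] even Q :=
  (subalgebraEquivOfMemIff (twistedEquivMatrix Q e)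
    (mem_even_iff_twistedEquivMatrix_mem Q he)).trans <|
    (subalgebraMatrixEquiv (even Q)).symm.trans <|
    (matrixEquivTensor (Fin 2) R (even Q)).trans (Algebra.TensorProduct.comm R _ _)

end hyperbolicSum

end EvenHyperbolicSum

section HyperbolicPair

/-- Isotropic vectors `u` and `v` with polar product one: the standard basis of a hyperbolic plane
in `Q`. -/
structure IsHyperbolicPair {R U : Type*} [CommRing R] [AddCommGroup U] [Module R U]
    (Q : QuadraticForm R U) (u v : U) : Prop where
  left : Q u = 0
  right : Q v = 0
  polar : QuadraticMap.polar Q u v = 1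

variable {R U : Type*} [CommRing R] [AddCommGroup U] [Module R U]

/-- The orthogonal complement of `u` and `v` with respect to the polar form of `Q`. -/
abbrev hyperbolicCompl (Q : QuadraticForm R U) (u v : U) : Submodule R U :=
  LinearMap.ker (Q.polarBilin u) ⊓ LinearMap.ker (Q.polarBilin v)

/-- The restriction of `Q` to the orthogonal complement of `u` and `v`. -/
abbrev hyperbolicComplForm (Q : QuadraticForm R U) (u v : U) :
    QuadraticForm R (hyperbolicCompl Q u v) :=
  Q.comp (hyperbolicCompl Q u v).subtype

variable {Q : QuadraticForm R U} {u v : U}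

theorem polar_left_hyperbolicCompl (w : hyperbolicCompl Q u v) : QuadraticMap.polar Q u w = 0 :=
  w.2.1

theorem polar_right_hyperbolicCompl (w : hyperbolicCompl Q u v) : QuadraticMap.polar Q v w = 0 :=
  w.2.2

namespace IsHyperbolicPair

theorem polar_symm (h : IsHyperbolicPair Q u v) : QuadraticMap.polar Q v u = 1 := by
  rw [QuadraticMap.polar_comm, h.polar]

/-- The orthogonal projection along the span of `u` and `v`. -/
def proj (h : IsHyperbolicPair Q u v) : U →ₗ[R] hyperbolicCompl Q u v :=
  (LinearMap.id - (Q.polarBilin v).smulRight u - (Q.polarBilin u).smulRight v).codRestrict _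
    fun m => by constructor <;> simp [h.left, h.right, h.polar, h.polar_symm]

theorem coe_proj (h : IsHyperbolicPair Q u v) (m : U) :
    (h.proj m : U) = m - QuadraticMap.polar Q v m • u - QuadraticMap.polar Q u m • v :=
  rfl

theorem proj_left (h : IsHyperbolicPair Q u v) : h.proj u = 0 := by
  simp [Subtype.ext_iff, coe_proj, h.left, h.polar_symm]

theorem proj_right (h : IsHyperbolicPair Q u v) : h.proj v = 0 := by
  simp [Subtype.ext_iff, coe_proj, h.right, h.polar]

theorem proj_coe (h : IsHyperbolicPair Q u v) (w : hyperbolicCompl Q u v) : h.proj w = w := by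
  simp [Subtype.ext_iff, coe_proj, polar_left_hyperbolicCompl, polar_right_hyperbolicCompl]

theorem smul_add_smul_add_proj (h : IsHyperbolicPair Q u v) (m : U) :
    QuadraticMap.polar Q v m • u + QuadraticMap.polar Q u m • v + h.proj m = m := by
  rw [coe_proj]; abel

theorem map_eq_mul_add_map_proj (h : IsHyperbolicPair Q u v) (m : U) :
    Q m = QuadraticMap.polar Q v m * QuadraticMap.polar Q u m + Q (h.proj m) := by
  conv_lhs => rw [← h.smul_add_smul_add_proj m]
  simp only [QuadraticMap.map_add Q, QuadraticMap.map_smul, QuadraticMap.polar_add_left,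
    QuadraticMap.polar_smul_left, QuadraticMap.polar_smul_right, h.left, h.right, h.polar,
    polar_left_hyperbolicCompl, polar_right_hyperbolicCompl, smul_eq_mul]
  ring

theorem polar_coe_hyperbolicCompl (h : IsHyperbolicPair Q u v) (w : hyperbolicCompl Q u v) (m : U) :
    QuadraticMap.polar Q w m = QuadraticMap.polar Q w (h.proj m) := by
  conv_lhs => rw [← h.smul_add_smul_add_proj m]
  simp only [QuadraticMap.polar_add_right, QuadraticMap.polar_smul_right,
    QuadraticMap.polar_comm Q w u, QuadraticMap.polar_comm Q w v,
    polar_left_hyperbolicCompl, polar_right_hyperbolicCompl, smul_zero, zero_add]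

/-- A hyperbolic pair splits `Q` as the orthogonal sum of a hyperbolic plane and the restriction to
the complement. -/
def isometryEquiv (h : IsHyperbolicPair Q u v) :
    Q.IsometryEquiv (hyperbolicSum (hyperbolicComplForm Q u v)) where
  toFun m := ((QuadraticMap.polar Q v m, QuadraticMap.polar Q u m), h.proj m)
  invFun p := p.1.1 • u + p.1.2 • v + p.2
  map_add' x y := by simp [QuadraticMap.polar_add_right]
  map_smul' r x := by simp [QuadraticMap.polar_smul_right]
  left_inv m := h.smul_add_smul_add_proj m
  right_inv p := by
    ext <;> simp [QuadraticMap.polar_add_right, h.left, h.right, h.polar, h.polar_symm,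
      h.proj_left, h.proj_right, h.proj_coe, polar_left_hyperbolicCompl,
      polar_right_hyperbolicCompl]
  map_app' m := (h.map_eq_mul_add_map_proj m).symm

theorem linearIndependent (h : IsHyperbolicPair Q u v) : LinearIndependent R ![u, v] := by
  refine LinearIndependent.pair_iff.2 fun s t hst => ⟨?_, ?_⟩
  · simpa [h.right, h.polar_symm] using congrArg (Q.polarBilin v) hst
  · simpa [h.left, h.polar] using congrArg (Q.polarBilin u) hst

theorem finrank_eq_two_of_hyperbolicCompl_eq_bot [StrongRankCondition R]
    (h : IsHyperbolicPair Q u v) (hbot : hyperbolicCompl Q u v = ⊥) :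
    Module.finrank R U = 2 := by
  have hspan : ⊤ ≤ Submodule.span R (Set.range ![u, v]) := fun m _ => by
    rw [Matrix.range_cons_cons_empty, Submodule.mem_span_pair]
    refine ⟨QuadraticMap.polar Q v m, QuadraticMap.polar Q u m, ?_⟩
    simpa [(Submodule.eq_bot_iff _).1 hbot _ (h.proj m).2] using h.smul_add_smul_add_proj m
  simpa using Module.finrank_eq_card_basis (Module.Basis.mk h.linearIndependent hspan)

theorem exists_map_ne_zero [StrongRankCondition R] (h : IsHyperbolicPair Q u v)
    (hQ : ∀ x, (∀ y, QuadraticMap.polar Q x y = 0) → x = 0) (hrank : Module.finrank R U ≠ 2) :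
    ∃ w : hyperbolicCompl Q u v, Q w ≠ 0 := by
  by_contra! hzero
  refine hrank (h.finrank_eq_two_of_hyperbolicCompl_eq_bot <|
    (Submodule.eq_bot_iff _).2 fun w hw => hQ w fun y => ?_)
  calc
    QuadraticMap.polar Q w y = QuadraticMap.polar Q w (h.proj y) :=
      h.polar_coe_hyperbolicCompl ⟨w, hw⟩ y
    _ = 0 := by
      rw [QuadraticMap.polar, hzero ⟨w, hw⟩, hzero, sub_zero, sub_zero]
      exact hzero (⟨w, hw⟩ + h.proj y)

end IsHyperbolicPair

end HyperbolicPair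

theorem stmt_10_general {F U : Type*} [Field F] [AddCommGroup U] [Module F U]
    (hrank : Module.finrank F U ≠ 2)
    (Q : QuadraticForm F U)
    (hQ : ∀ x : U, (∀ y : U, QuadraticMap.polar (⇑Q) x y = 0) → x = 0)
    (u v : U) (hu : Q u = 0) (hv : Q v = 0) (huv : QuadraticMap.polar (⇑Q) u v = 1) :
    Nonempty ((CliffordAlgebra.even Q) ≃ₐ[F]
      (Matrix (Fin 2) (Fin 2) F ⊗[F]
        (CliffordAlgebra.even (Q.comp
          (LinearMap.ker (Q.polarBilin u) ⊓ LinearMap.ker (Q.polarBilin v)).subtype)))) := by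
  have h : IsHyperbolicPair Q u v := ⟨hu, hv, huv⟩
  obtain ⟨w, hw⟩ := h.exists_map_ne_zero hQ hrank
  have hunit : IsUnit (CliffordAlgebra.ι (hyperbolicComplForm Q u v) w) :=
    CliffordAlgebra.isUnit_ι_of_isUnit _ hw.isUnit
  exact ⟨(evenEquivOfIsometry h.isometryEquiv).trans (hyperbolicSum.evenEquivTensor _
    (e := hunit.unit) (CliffordAlgebra.ι_mem_evenOdd_one _ w))⟩

/-- if `(U,Q)` is an odd-dimensional nondegenerate quadratic space,
`u, v` are isotropic vectors with `polar Q u v = 1`, and `U'` is the subspace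
orthogonal to `u` and `v`, then the even Clifford algebra `Cl₀(U,Q)` is isomorphic
to `Mat₂(F) ⊗ Cl₀(U',Q')`, where `Q'` is the restriction of `Q` to `U'`. -/
theorem stmt_10 {F U : Type*} [Field F] [IsAlgClosed F] [CharZero F]
    [AddCommGroup U] [Module F U] [FiniteDimensional F U]
    (hodd : Odd (Module.finrank F U))
    (Q : QuadraticForm F U)
    (hQ : ∀ x : U, (∀ y : U, QuadraticMap.polar (⇑Q) x y = 0) → x = 0)
    (u v : U) (hu : Q u = 0) (hv : Q v = 0) (huv : QuadraticMap.polar (⇑Q) u v = 1) :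
    Nonempty ((CliffordAlgebra.even Q) ≃ₐ[F]
      (Matrix (Fin 2) (Fin 2) F ⊗[F]
        (CliffordAlgebra.even (Q.comp
          (LinearMap.ker (Q.polarBilin u) ⊓ LinearMap.ker (Q.polarBilin v)).subtype)))) :=
  stmt_10_general (fun h2 => absurd (h2 ▸ hodd) (by decide)) Q hQ u v hu hv huv
end
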